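/- arXiv:1911.01112 — 2 statements merged into one kernel-verified Lean document; each statement's English description precedes it below -/
import Mathlib

section
/- Let n ≥ 1 and let p, q, a, b be real numbers with 1 ≤ p ≤ q < ∞, −n/q < b ≤ a, and a − b − 1 = n/q − n/p. Then there exists a constant C > 0 such that for every smooth compactly supported function f : ℝ^n → ℂ, the weighted interpolation inequality (∫_{ℝ^n} |x|^{bq} |f(x)|^q dx)^{1/q} ≤ C (∫_{ℝ^n} |x|^{ap} |∇f(x)|^p dx)^{1/p} holds. -/
open MeasureTheory Real

theorem ckn_ray {n : ℕ} {F : Type*} [NormedAddCommGroup F] [NormedSpace ℝ F]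
    {u : EuclideanSpace ℝ (Fin n) → F} (hu : ContDiff ℝ 1 u) (h2u : HasCompactSupport u)
    (x : EuclideanSpace ℝ (Fin n)) (hx : x ≠ 0) :
    ‖u x‖ₑ ≤ ∫⁻ t in Set.Iic (-1 : ℝ), ‖fderiv ℝ u (t • (-x))‖ₑ * ‖x‖ₑ := by
  have hx' : -x ≠ 0 := neg_ne_zero.2 hx
  have h1 : ContDiff ℝ 1 (fun t : ℝ => u (t • (-x))) := by fun_prop
  have h2 : HasCompactSupport (fun t : ℝ => u (t • (-x))) :=
    h2u.comp_isClosedEmbedding (isClosedEmbedding_smul_left hx')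
  have h3 := HasCompactSupport.enorm_le_lintegral_Ici_deriv h1 h2 (-1)
  simp only [neg_smul, one_smul, neg_neg, smul_neg] at h3 ⊢
  refine h3.trans (lintegral_mono fun t => ?_)
  have hd : HasDerivAt (fun t : ℝ => u (-(t • x))) (fderiv ℝ u (-(t • x)) (-x)) t := by
    have := (hu.differentiable one_ne_zero (-(t • x))).hasFDerivAt
    refine this.comp_hasDerivAt t ?_
    simpa using ((hasDerivAt_id t).smul_const x).fun_neg
  simp only
  rw [hd.deriv]
  simpa using ContinuousLinearMap.le_opENorm (fderiv ℝ u (-(t • x))) (-x)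

theorem ckn_scale {n : ℕ} (G : EuclideanSpace ℝ (Fin n) → ENNReal) (hG : Measurable G) (t : ℝ)
    (ht : t ≠ 0) :
    ∫⁻ x, G (t • x) = ENNReal.ofReal (|t| ^ (-(n:ℝ))) * ∫⁻ x, G x := by
  have h := Measure.map_addHaar_smul (volume : Measure (EuclideanSpace ℝ (Fin n))) ht
  rw [← lintegral_map hG (measurable_const_smul t), h, lintegral_smul_measure]
  simp [abs_inv, Real.rpow_neg]

theorem ckn_hardy_meas {n : ℕ} {F : Type*} [NormedAddCommGroup F] [NormedSpace ℝ F]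
    {u : EuclideanSpace ℝ (Fin n) → F} (hu : ContDiff ℝ 1 u) (A Q : ℝ) :
    Measurable (fun x => ‖x‖ₑ ^ A * ‖fderiv ℝ u x‖ₑ ^ Q) := by
  have := (hu.continuous_fderiv one_ne_zero).enorm
  have h2 : Measurable (fun x => ‖fderiv ℝ u x‖ₑ) := this.measurable
  fun_prop

theorem ckn_ae {n : ℕ} (hn : 1 ≤ n) : ∀ᵐ x : EuclideanSpace ℝ (Fin n), x ≠ 0 := by
  have : NeZero n := ⟨by omega⟩
  exact Measure.ae_ne volume 0 

theorem ckn_hardy {n : ℕ} (hn : 1 ≤ n) {F : Type*} [NormedAddCommGroup F] [NormedSpace ℝ F]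
    {u : EuclideanSpace ℝ (Fin n) → F} (hu : ContDiff ℝ 1 u) (h2u : HasCompactSupport u)
    (A : ℝ) (hA : 1 - (n:ℝ) < A) :
    ∫⁻ x, ‖x‖ₑ ^ (A - 1) * ‖u x‖ₑ ≤
      ENNReal.ofReal (1 / (A + n - 1)) * ∫⁻ x, ‖x‖ₑ ^ A * ‖fderiv ℝ u x‖ₑ := by
  have hm : Measurable (fun x => ‖x‖ₑ ^ A * ‖fderiv ℝ u x‖ₑ) := by
    simpa using ckn_hardy_meas hu A 1
  have hm1 : Measurable (fun x => ‖fderiv ℝ u x‖ₑ) := by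
    simpa using ckn_hardy_meas hu 0 1
  have hT : ∫⁻ t in Set.Iic (-1 : ℝ), ENNReal.ofReal (|t| ^ (-A-n)) = ENNReal.ofReal (1 / (A + n - 1)) := by
    have e1 : ∫⁻ t in Set.Iic (-1 : ℝ), ENNReal.ofReal (|t| ^ (-A-n)) =
      ∫⁻ t in Set.Ioi (1 : ℝ), ENNReal.ofReal (t ^ (-A-n)) := by
      have := (Measure.measurePreserving_neg (volume : Measure ℝ)).setLIntegral_comp_preimage_emb
        (MeasurableEquiv.neg ℝ).measurableEmbedding (fun t => ENNReal.ofReal (|t| ^ (-A-n))) (Set.Ici 1)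
      simp only [abs_neg, Set.neg_preimage, Set.neg_Ici] at this
      rw [this, setLIntegral_congr Ioi_ae_eq_Ici.symm]
      refine setLIntegral_congr_fun measurableSet_Ioi fun t ht => ?_
      rw [abs_of_pos (lt_trans one_pos ht)]
    rw [e1, ← ofReal_integral_eq_lintegral_ofReal, integral_Ioi_rpow_of_lt (by linarith) one_pos]
    · congr 1
      rw [one_rpow, ← neg_div_neg_eq]; congr 1 <;> ring
    · exact integrableOn_Ioi_rpow_of_lt (by linarith) one_pos
    · refine (ae_restrict_iff' measurableSet_Ioi).2 (.of_forall fun t ht => ?_)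
      exact Real.rpow_nonneg (lt_trans one_pos ht).le _
  calc _ ≤ ∫⁻ x, ∫⁻ t in Set.Iic (-1 : ℝ), ‖x‖ₑ ^ A * ‖fderiv ℝ u ((-t) • x)‖ₑ := by
        refine lintegral_mono_ae ?_
        filter_upwards [ckn_ae hn] with x hx
        have hx0 : ‖x‖ₑ ≠ 0 := by simpa using hx
        have hxA : ‖x‖ₑ ^ A ≠ ⊤ := ENNReal.rpow_ne_top_of_ne_zero hx0 (by simp)
        calc _ ≤ ‖x‖ₑ ^ (A - 1) * ∫⁻ t in Set.Iic (-1 : ℝ), ‖fderiv ℝ u (t • (-x))‖ₑ * ‖x‖ₑ := by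
              gcongr; exact ckn_ray hu h2u x hx
          _ = ∫⁻ t in Set.Iic (-1 : ℝ), ‖x‖ₑ ^ (A - 1) * (‖fderiv ℝ u (t • (-x))‖ₑ * ‖x‖ₑ) := by
              rw [lintegral_const_mul' _ _ (ENNReal.rpow_ne_top_of_ne_zero hx0 (by simp))]
          _ = _ := by
              refine lintegral_congr fun t => ?_
              have : ‖x‖ₑ ^ A = ‖x‖ₑ ^ (A - 1) * ‖x‖ₑ := by
                conv_rhs => rw [← ENNReal.rpow_one ‖x‖ₑ, ← ENNReal.rpow_mul, one_mul]
                rw [← ENNReal.rpow_add _ _ hx0 (by simp)]; simp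
              rw [this]; simp only [smul_neg, neg_smul]; ring
    _ = ∫⁻ t in Set.Iic (-1 : ℝ), ∫⁻ x, ‖x‖ₑ ^ A * ‖fderiv ℝ u ((-t) • x)‖ₑ := by
        refine lintegral_lintegral_swap ?_
        refine Measurable.aemeasurable ?_
        have : Measurable fun z : EuclideanSpace ℝ (Fin n) × ℝ => (-z.2) • z.1 := by fun_prop
        have := hm1.comp this
        simp only [Function.comp_def] at this
        simp only [Function.uncurry_def]
        fun_prop
    _ = ∫⁻ t in Set.Iic (-1 : ℝ), ENNReal.ofReal (|t| ^ (-A-n)) * ∫⁻ x, ‖x‖ₑ ^ A * ‖fderiv ℝ u x‖ₑ := by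
        refine setLIntegral_congr_fun measurableSet_Iic fun t ht => ?_
        have ht' : 0 < |t| := by
          simp only [Set.mem_Iic] at ht
          rw [abs_pos]; linarith
        have ht0 : -t ≠ 0 := by simpa using ht'
        have e := ckn_scale _ hm (-t) ht0
        rw [abs_neg] at e
        have : ∀ x : EuclideanSpace ℝ (Fin n), ‖x‖ₑ ^ A * ‖fderiv ℝ u ((-t) • x)‖ₑ =
          ENNReal.ofReal (|t| ^ (-A)) * (‖(-t) • x‖ₑ ^ A * ‖fderiv ℝ u ((-t) • x)‖ₑ) := by
          intro x
          have e2 : ‖(-t) • x‖ₑ ^ A = ENNReal.ofReal (|t| ^ A) * ‖x‖ₑ ^ A := by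
            rw [enorm_smul, ← ofReal_norm, Real.norm_eq_abs, abs_neg]
            have : ENNReal.ofReal |t| ≠ 0 := by simpa using ht'
            rw [ENNReal.ofReal_rpow_of_pos ht' |>.symm]
            by_cases hx : ‖x‖ₑ = 0
            · rw [hx]
              rcases lt_trichotomy A 0 with h | h | h
              · rw [mul_zero, ENNReal.zero_rpow_of_neg h, ENNReal.mul_top]
                simp [ENNReal.rpow_eq_zero_iff, this]
              · simp [h]
              · rw [mul_zero, ENNReal.zero_rpow_of_pos h, mul_zero]
            · exact ENNReal.mul_rpow_of_ne_zero this hx _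
          rw [e2, ← mul_assoc, ← mul_assoc, ← ENNReal.ofReal_mul (by positivity), ← Real.rpow_add ht']
          simp
        simp_rw [this]
        rw [lintegral_const_mul' _ _ (by simp), e, ← mul_assoc, ← ENNReal.ofReal_mul (by positivity), ← Real.rpow_add ht']
        simp [sub_eq_add_neg]
    _ = _ := by
        rw [lintegral_mul_const _ (by fun_prop), hT]

noncomputable def cknW {n : ℕ} (m : ℕ) (A ε : ℝ) (x : EuclideanSpace ℝ (Fin n)) : ℝ :=
  (‖x‖ ^ 2) ^ m * (‖x‖ ^ 2 + ε) ^ (A / 2 - m)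

theorem cknW_contDiff {n : ℕ} (m : ℕ) (A ε : ℝ) (hε : 0 < ε) :
    ContDiff ℝ 1 (cknW (n := n) m A ε) := by
  unfold cknW
  have h : ContDiff ℝ 1 (fun x : EuclideanSpace ℝ (Fin n) => ‖x‖ ^ 2) := contDiff_norm_sq ℝ
  refine (h.pow m).mul ((h.add contDiff_const).rpow_const_of_ne fun x => ?_)
  positivity

theorem cknW_nonneg {n : ℕ} (m : ℕ) (A ε : ℝ) (hε : 0 < ε) (x : EuclideanSpace ℝ (Fin n)) :
    0 ≤ cknW m A ε x := by
  unfold cknW; positivity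

theorem ckn_pow_aux (r : ℝ) (hr : 0 < r) (A : ℝ) : (r ^ 2) ^ (A / 2) = r ^ A := by
  rw [← Real.rpow_natCast, ← Real.rpow_mul hr.le]; congr 1; push_cast; ring

theorem cknW_le {n : ℕ} (m : ℕ) (A ε : ℝ) (hε : 0 < ε) (hm : A / 2 ≤ m)
    (x : EuclideanSpace ℝ (Fin n)) (hx : x ≠ 0) :
    cknW m A ε x ≤ ‖x‖ ^ A := by
  have hx' : 0 < ‖x‖ := norm_pos_iff.2 hx
  unfold cknW
  calc _ ≤ (‖x‖ ^ 2) ^ m * (‖x‖ ^ 2) ^ (A / 2 - m) := by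
        refine mul_le_mul_of_nonneg_left ?_ (by positivity)
        exact Real.rpow_le_rpow_of_nonpos (by positivity) (by linarith) (by linarith)
    _ = _ := by
        rw [← Real.rpow_natCast, ← Real.rpow_add (by positivity), ← ckn_pow_aux _ hx']
        congr 1; ring

theorem cknW_fderiv_le {n : ℕ} (m : ℕ) (A ε : ℝ) (hε : 0 < ε) (hm : A / 2 ≤ m)
    (x : EuclideanSpace ℝ (Fin n)) (hx : x ≠ 0) :
    ‖fderiv ℝ (cknW m A ε) x‖ ≤ (4 * m - A) * ‖x‖ ^ (A - 1) := by
  have hx' : 0 < ‖x‖ := norm_pos_iff.2 hx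
  set s := ‖x‖ ^ 2 with hs
  have hs0 : 0 < s := by positivity
  set γ := A / 2 - m with hγ
  have hγ0 : γ ≤ 0 := by simp only [hγ]; linarith
  have h1 : HasDerivAt (fun s : ℝ => s ^ m * (s + ε) ^ γ)
      ((m * s ^ (m - 1)) * (s + ε) ^ γ + s ^ m * (γ * (s + ε) ^ (γ - 1))) s := by
    have a1 := hasDerivAt_pow m s
    have a2 : HasDerivAt (fun s : ℝ => (s + ε) ^ γ) (γ * (s + ε) ^ (γ - 1)) s := by
      have := ((hasDerivAt_id s).add_const ε).rpow_const (p := γ) (Or.inl (by simp; positivity))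
      simpa using this
    exact a1.mul a2
  have h2 : HasFDerivAt (fun x : EuclideanSpace ℝ (Fin n) => ‖x‖ ^ 2) (2 • innerSL ℝ x) x :=
    (hasStrictFDerivAt_norm_sq x).hasFDerivAt
  have h3 := h1.comp_hasFDerivAt x h2
  have h4 : fderiv ℝ (cknW m A ε) x = _ := h3.fderiv
  rw [h4, norm_smul]
  have h5 : ‖(2 • innerSL ℝ x : EuclideanSpace ℝ (Fin n) →L[ℝ] ℝ)‖ ≤ 2 * ‖x‖ := by
    rw [← Nat.cast_smul_eq_nsmul ℝ, norm_smul, innerSL_apply_norm]; simp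
  have e1 : s ^ (A / 2 - 1) = ‖x‖ ^ (A - 2) := by
    rw [← ckn_pow_aux _ hx']; congr 1; ring
  have k1 : (m * s ^ (m - 1)) * (s + ε) ^ γ ≤ m * s ^ (A / 2 - 1) := by
    rcases Nat.eq_zero_or_pos m with h | h
    · simp [h]
    rw [mul_assoc]; gcongr
    calc _ ≤ s ^ (m - 1) * s ^ γ := by
          refine mul_le_mul_of_nonneg_left ?_ (by positivity)
          exact Real.rpow_le_rpow_of_nonpos (by positivity) (by linarith) (by linarith)
      _ = _ := by
          rw [← Real.rpow_natCast, ← Real.rpow_add hs0]; congr 1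
          rw [Nat.cast_sub h, hγ]; push_cast; ring
  have k2 : s ^ m * ((-γ) * (s + ε) ^ (γ - 1)) ≤ (-γ) * s ^ (A / 2 - 1) := by
    have : 0 ≤ -γ := by linarith
    rw [mul_left_comm]; gcongr
    calc _ ≤ s ^ m * s ^ (γ - 1) := by
          refine mul_le_mul_of_nonneg_left ?_ (by positivity)
          exact Real.rpow_le_rpow_of_nonpos (by positivity) (by linarith) (by linarith)
      _ = _ := by
          rw [← Real.rpow_natCast, ← Real.rpow_add hs0]; congr 1
          rw [hγ]; ring
  have k3 : ‖(m * s ^ (m - 1)) * (s + ε) ^ γ + s ^ m * (γ * (s + ε) ^ (γ - 1))‖ ≤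
      (2 * m - A / 2) * s ^ (A / 2 - 1) := by
    refine (norm_add_le _ _).trans ?_
    rw [Real.norm_of_nonneg (r := _ * (s + ε) ^ γ) (by positivity)]
    have : ‖s ^ m * (γ * (s + ε) ^ (γ - 1))‖ = s ^ m * ((-γ) * (s + ε) ^ (γ - 1)) := by
      rw [Real.norm_of_nonpos]
      · ring
      · have : 0 ≤ s ^ m * (s + ε) ^ (γ - 1) := by positivity
        nlinarith
    rw [this]
    have : (2 * m - A / 2) * s ^ (A / 2 - 1) = m * s ^ (A / 2 - 1) + (-γ) * s ^ (A / 2 - 1) := by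
      rw [hγ]; ring
    rw [this]; linarith
  calc _ ≤ ((2 * m - A / 2) * s ^ (A / 2 - 1)) * (2 * ‖x‖) := by gcongr; exact (norm_nonneg _).trans k3
    _ = _ := by
      rw [e1]
      have : ‖x‖ ^ (A - 1) = ‖x‖ ^ (A - 2) * ‖x‖ := by
        rw [← Real.rpow_add_one hx'.ne']; congr 1; ring
      rw [this]; ring

theorem cknW_tendsto {n : ℕ} (m : ℕ) (A : ℝ) (x : EuclideanSpace ℝ (Fin n)) (hx : x ≠ 0) :
    Filter.Tendsto (fun k : ℕ => cknW m A (1 / ((k:ℝ) + 1)) x) Filter.atTop (nhds (‖x‖ ^ A)) := by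
  have hx' : 0 < ‖x‖ := norm_pos_iff.2 hx
  have h0 := tendsto_one_div_add_atTop_nhds_zero_nat (𝕜 := ℝ)
  have h1 : Filter.Tendsto (fun k : ℕ => ‖x‖ ^ 2 + 1 / ((k:ℝ) + 1)) Filter.atTop (nhds (‖x‖ ^ 2 + 0)) :=
    h0.const_add _
  rw [add_zero] at h1
  have h2 := (h1.rpow_const (p := A / 2 - m) (Or.inl (by positivity))).const_mul ((‖x‖ ^ 2) ^ m)
  have : (‖x‖ ^ 2) ^ m * (‖x‖ ^ 2) ^ (A / 2 - m) = ‖x‖ ^ A := by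
    rw [← Real.rpow_natCast, ← Real.rpow_add (by positivity), ← ckn_pow_aux _ hx']
    congr 1; ring
  rw [this] at h2
  exact h2

theorem ckn_enorm_rpow {E : Type*} [NormedAddCommGroup E] (x : E) (hx : x ≠ 0) (A : ℝ) :
    ENNReal.ofReal (‖x‖ ^ A) = ‖x‖ₑ ^ A := by
  rw [← ofReal_norm, ENNReal.ofReal_rpow_of_pos (norm_pos_iff.2 hx)]

/-- weighted Sobolev, p = 1, n ≥ 2 -/
theorem ckn_sobolev {n : ℕ} (hn : 2 ≤ n) (A P : ℝ) (hA : 1 - (n:ℝ) < A)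
    (hP : Real.HolderConjugate n P) :
    ∃ C : ENNReal, C ≠ ⊤ ∧ ∀ {F : Type} [NormedAddCommGroup F] [NormedSpace ℝ F]
    {u : EuclideanSpace ℝ (Fin n) → F}, ContDiff ℝ 1 u → HasCompactSupport u →
    ∫⁻ x, (‖x‖ₑ ^ A * ‖u x‖ₑ) ^ P ≤ C * (∫⁻ x, ‖x‖ₑ ^ A * ‖fderiv ℝ u x‖ₑ) ^ P := by
  obtain ⟨m, hm⟩ := exists_nat_ge (A / 2)
  have hP0 : 0 < P := hP.symm.pos
  set H := ENNReal.ofReal (1 / (A + n - 1))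
  set K := ENNReal.ofReal (4 * m - A)
  refine ⟨lintegralPowLePowLIntegralFDerivConst (volume : Measure (EuclideanSpace ℝ (Fin n))) P
    * (K * H + 1) ^ P, ?_, ?_⟩
  · refine ENNReal.mul_ne_top (by simp) (ENNReal.rpow_ne_top_of_nonneg hP0.le ?_)
    exact ENNReal.add_ne_top.2 ⟨ENNReal.mul_ne_top (by simp [K]) (by simp [H]), by simp⟩
  intro F _ _ u hu h2u
  set M := ∫⁻ x, ‖x‖ₑ ^ A * ‖fderiv ℝ u x‖ₑ with hM
  have hh : ∫⁻ x, ‖x‖ₑ ^ (A - 1) * ‖u x‖ₑ ≤ H * M := ckn_hardy (by omega) hu h2u A hA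
  have hum : Measurable (fun x => ‖u x‖ₑ) := hu.continuous.enorm.measurable
  have hm : Measurable (fun x => ‖x‖ₑ ^ A * ‖fderiv ℝ u x‖ₑ) := by
    simpa using ckn_hardy_meas hu A 1
  let v : ℕ → EuclideanSpace ℝ (Fin n) → F := fun k x => cknW m A (1 / ((k:ℝ) + 1)) x • u x
  have hk : ∀ k : ℕ, 0 < 1 / ((k:ℝ) + 1) := fun k => by positivity
  have hv : ∀ k, ContDiff ℝ 1 (v k) := fun k => (cknW_contDiff m A _ (hk k)).smul hu
  have hv2 : ∀ k, HasCompactSupport (v k) := fun k => h2u.smul_left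
  have key : ∀ k, ∫⁻ x, ‖v k x‖ₑ ^ P ≤
    lintegralPowLePowLIntegralFDerivConst (volume : Measure (EuclideanSpace ℝ (Fin n))) P
    * (K * H + 1) ^ P * M ^ P := by
    intro k
    have := lintegral_pow_le_pow_lintegral_fderiv (volume : Measure (EuclideanSpace ℝ (Fin n)))
      (hv k) (hv2 k) (p := P) (by simpa using hP)
    refine this.trans ?_
    rw [mul_assoc, ← ENNReal.mul_rpow_of_nonneg _ _ hP0.le]
    gcongr
    calc ∫⁻ x, ‖fderiv ℝ (v k) x‖ₑ ≤ ∫⁻ x, (K * (‖x‖ₑ ^ (A - 1) * ‖u x‖ₑ) + ‖x‖ₑ ^ A * ‖fderiv ℝ u x‖ₑ) := by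
          refine lintegral_mono_ae ?_
          filter_upwards [ckn_ae (by omega : 1 ≤ n)] with x hx
          have hd : fderiv ℝ (v k) x = cknW m A (1 / ((k:ℝ) + 1)) x • fderiv ℝ u x +
              (fderiv ℝ (cknW m A (1 / ((k:ℝ) + 1))) x).smulRight (u x) := fderiv_fun_smul
            ((cknW_contDiff m A _ (hk k)).differentiable one_ne_zero x)
            (hu.differentiable one_ne_zero x)
          have hadd : ∀ a b : EuclideanSpace ℝ (Fin n) →L[ℝ] F, ‖a + b‖ₑ ≤ ‖b‖ₑ + ‖a‖ₑ := by
            intro a b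
            rw [add_comm ‖b‖ₑ]
            exact enorm_add_le a b
          rw [hd]
          refine (hadd _ _).trans ?_
          gcongr
          · have e1 : ‖ContinuousLinearMap.smulRight (fderiv ℝ (cknW m A (1 / ((k:ℝ) + 1))) x) (u x)‖ₑ
              = ‖fderiv ℝ (cknW m A (1 / ((k:ℝ) + 1))) x‖ₑ * ‖u x‖ₑ := by
              simp only [← ofReal_norm]
              rw [ContinuousLinearMap.norm_smulRight_apply, ENNReal.ofReal_mul (norm_nonneg _)]
            rw [e1, ← mul_assoc]
            gcongr
            rw [← ckn_enorm_rpow x hx, ← ENNReal.ofReal_mul' (by positivity), ← ofReal_norm]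
            exact ENNReal.ofReal_le_ofReal (cknW_fderiv_le m A _ (hk k) ‹_› x hx)
          · rw [enorm_smul]
            gcongr
            rw [← ckn_enorm_rpow x hx, ← ofReal_norm, Real.norm_of_nonneg (cknW_nonneg _ _ _ (hk k) _)]
            exact ENNReal.ofReal_le_ofReal (cknW_le m A _ (hk k) ‹_› x hx)
      _ = K * (∫⁻ x, ‖x‖ₑ ^ (A - 1) * ‖u x‖ₑ) + M := by
          rw [lintegral_add_right _ hm, lintegral_const_mul' _ _ (by simp [K])]
      _ ≤ K * (H * M) + M := by gcongr
      _ = _ := by ring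
  calc _ ≤ ∫⁻ x, Filter.liminf (fun k => ‖v k x‖ₑ ^ P) Filter.atTop := by
        refine lintegral_mono_ae ?_
        filter_upwards [ckn_ae (by omega : 1 ≤ n)] with x hx
        refine le_of_eq (Filter.Tendsto.liminf_eq ?_).symm
        rw [← ckn_enorm_rpow x hx]
        have h1 := ((cknW_tendsto m A x hx).smul_const (u x)).enorm
        rw [enorm_smul, ← ofReal_norm (‖x‖ ^ A), Real.norm_of_nonneg (by positivity)] at h1
        exact (ENNReal.continuous_rpow_const.tendsto _).comp h1
    _ ≤ Filter.liminf (fun k => ∫⁻ x, ‖v k x‖ₑ ^ P) Filter.atTop := by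
        refine lintegral_liminf_le fun k => ?_
        exact (hv k).continuous.enorm.measurable.pow_const _
    _ ≤ _ := by
        refine (Filter.liminf_le_liminf (.of_forall key)).trans ?_
        simp

theorem ckn_line (G : EuclideanSpace ℝ (Fin 1) → ENNReal) (hG : Measurable G)
    (x : EuclideanSpace ℝ (Fin 1)) (hx : x ≠ 0) :
    ∫⁻ t : ℝ, G (t • x) * ‖x‖ₑ = ∫⁻ y, G y := by
  have hmp := (PiLp.volume_preserving_toLp (Fin 1)).comp
    ((volume_preserving_funUnique (Fin 1) ℝ).symm)
  set L : ℝ → EuclideanSpace ℝ (Fin 1) := _ ∘ _ with hL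
  have hLx : ∀ t : ℝ, t • x = L (t * x 0) := by
    intro t; ext i
    fin_cases i
    simp [hL, MeasurableEquiv.funUnique]
  have hnx : ‖x‖ = |x 0| := by
    rw [EuclideanSpace.norm_eq]; simp [Real.sqrt_sq_eq_abs]
  have hx0 : x 0 ≠ 0 := by
    intro h; rw [h, abs_zero, norm_eq_zero] at hnx; exact hx hnx
  have hGL : Measurable (fun t => G (L t)) := hG.comp hmp.measurable
  rw [← hmp.lintegral_comp hG, lintegral_mul_const' _ _ (by simp)]
  simp_rw [hLx]
  conv_rhs => rw [← Real.smul_map_volume_mul_right hx0, lintegral_smul_measure,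
    lintegral_map hGL (by fun_prop)]
  rw [mul_comm, ← ofReal_norm, hnx]; rfl

theorem ckn_sup {F : Type*} [NormedAddCommGroup F] [NormedSpace ℝ F]
    {u : EuclideanSpace ℝ (Fin 1) → F} (hu : ContDiff ℝ 1 u) (h2u : HasCompactSupport u)
    (A : ℝ) (hA : 0 < A) (x : EuclideanSpace ℝ (Fin 1)) (hx : x ≠ 0) :
    ‖x‖ₑ ^ A * ‖u x‖ₑ ≤ ∫⁻ x, ‖x‖ₑ ^ A * ‖fderiv ℝ u x‖ₑ := by
  have hm : Measurable (fun x => ‖x‖ₑ ^ A * ‖fderiv ℝ u x‖ₑ) := by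
    simpa using ckn_hardy_meas hu A 1
  calc _ ≤ ‖x‖ₑ ^ A * ∫⁻ t in Set.Iic (-1 : ℝ), ‖fderiv ℝ u (t • (-x))‖ₑ * ‖x‖ₑ := by
        gcongr; exact ckn_ray hu h2u x hx
    _ = ∫⁻ t in Set.Iic (-1 : ℝ), ‖x‖ₑ ^ A * (‖fderiv ℝ u (t • (-x))‖ₑ * ‖x‖ₑ) := by
        rw [lintegral_const_mul' _ _ (ENNReal.rpow_ne_top_of_nonneg hA.le (by simp))]
    _ ≤ ∫⁻ t in Set.Iic (-1 : ℝ), (‖t • (-x)‖ₑ ^ A * ‖fderiv ℝ u (t • (-x))‖ₑ) * ‖-x‖ₑ := by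
        refine setLIntegral_mono' measurableSet_Iic fun t ht => ?_
        rw [mul_assoc, enorm_neg]
        gcongr
        rw [enorm_smul, enorm_neg]
        refine le_mul_of_one_le_left' ?_
        simp only [Set.mem_Iic] at ht
        rw [← ofReal_norm, Real.norm_eq_abs, ENNReal.one_le_ofReal, abs_of_neg (by linarith)]
        linarith
    _ ≤ ∫⁻ t : ℝ, (‖t • (-x)‖ₑ ^ A * ‖fderiv ℝ u (t • (-x))‖ₑ) * ‖-x‖ₑ :=
        setLIntegral_le_lintegral _ _
    _ = _ := ckn_line _ hm (-x) (neg_ne_zero.2 hx)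

theorem ckn_one {n : ℕ} (hn : 1 ≤ n) (A Q β : ℝ) (hA : 1 - (n:ℝ) < A) (hQ : 1 ≤ Q)
    (hQn : ((n:ℝ) - 1) * Q ≤ n) (hβ : β = (A - 1 + n) * Q - n) :
    ∃ C : ENNReal, C ≠ ⊤ ∧ ∀ {F : Type} [NormedAddCommGroup F] [NormedSpace ℝ F]
    {u : EuclideanSpace ℝ (Fin n) → F}, ContDiff ℝ 1 u → HasCompactSupport u →
    ∫⁻ x, ‖x‖ₑ ^ β * ‖u x‖ₑ ^ Q ≤ C * (∫⁻ x, ‖x‖ₑ ^ A * ‖fderiv ℝ u x‖ₑ) ^ Q := by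
  rcases hn.eq_or_lt with h1 | h2
  · subst h1
    refine ⟨ENNReal.ofReal (1 / (A + (1:ℕ) - 1)), by simp, ?_⟩
    intro F _ _ u hu h2u
    have hh := ckn_hardy hn hu h2u A hA
    set M := ∫⁻ x, ‖x‖ₑ ^ A * ‖fderiv ℝ u x‖ₑ with hM
    have hum : Measurable (fun x => ‖u x‖ₑ) := hu.continuous.enorm.measurable
    calc _ ≤ ∫⁻ x, M ^ (Q - 1) * (‖x‖ₑ ^ (A - 1) * ‖u x‖ₑ) := by
          refine lintegral_mono_ae ?_
          filter_upwards [ckn_ae hn] with x hx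
          have hx0 : ‖x‖ₑ ≠ 0 := by simpa using hx
          have hs := ckn_sup hu h2u A (by simpa using hA) x hx
          have : ‖x‖ₑ ^ β * ‖u x‖ₑ ^ Q =
              (‖x‖ₑ ^ A * ‖u x‖ₑ) ^ (Q - 1) * (‖x‖ₑ ^ (A - 1) * ‖u x‖ₑ) := by
            rw [ENNReal.mul_rpow_of_nonneg _ _ (by linarith), ← ENNReal.rpow_mul]
            have e1 : ‖x‖ₑ ^ β = ‖x‖ₑ ^ (A * (Q - 1)) * ‖x‖ₑ ^ (A - 1) := by
              rw [← ENNReal.rpow_add _ _ hx0 (by simp), hβ]; congr 1; push_cast; ring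
            have e2 : ‖u x‖ₑ ^ Q = ‖u x‖ₑ ^ (Q - 1) * ‖u x‖ₑ := by
              conv_rhs => rw [← ENNReal.rpow_one ‖u x‖ₑ, ← ENNReal.rpow_mul, one_mul]
              rw [← ENNReal.rpow_add_of_nonneg _ _ (by linarith) zero_le_one]; simp
            rw [e1, e2]; ring
          rw [this]
          gcongr
      _ = M ^ (Q - 1) * ∫⁻ x, (‖x‖ₑ ^ (A - 1) * ‖u x‖ₑ) := by
          rw [lintegral_const_mul _ (by fun_prop)]
      _ ≤ M ^ (Q - 1) * (ENNReal.ofReal (1 / (A + (1:ℕ) - 1)) * M) := by gcongr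
      _ = _ := by
          have e2 : M ^ Q = M ^ (Q - 1) * M := by
            conv_rhs => rw [← ENNReal.rpow_one M, ← ENNReal.rpow_mul, one_mul]
            rw [← ENNReal.rpow_add_of_nonneg _ _ (by linarith) zero_le_one]; simp
          rw [e2]; ring
  · have hn2 : (2:ℝ) ≤ n := by exact_mod_cast h2
    have hP : Real.HolderConjugate (n:ℝ) ((n:ℝ) / (n - 1)) := by
      have := Real.HolderConjugate.conjExponent (p := (n:ℝ)) (by linarith)
      simpa [Real.conjExponent] using this
    obtain ⟨C, hC, hS⟩ := ckn_sobolev h2 A _ hA hP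
    set P := (n:ℝ) / (n - 1) with hPd
    have hP0 : 0 ≤ P := hP.symm.nonneg
    set H := ENNReal.ofReal (1 / (A + n - 1)) with hH
    set s := (Q - 1) * ((n:ℝ) - 1) with hs
    have hs0 : 0 ≤ s := mul_nonneg (by linarith) (by linarith)
    have hs1 : 0 ≤ 1 - s := by rw [hs]; nlinarith
    have hPs : P * s = n * (Q - 1) := by
      rw [hPd, hs]; field_simp [show (n:ℝ) - 1 ≠ 0 by linarith]
    refine ⟨H ^ (1 - s) * C ^ s, ENNReal.mul_ne_top
      (ENNReal.rpow_ne_top_of_nonneg hs1 (by simp [H])) (ENNReal.rpow_ne_top_of_nonneg hs0 hC), ?_⟩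
    intro F _ _ u hu h2u
    have hh := ckn_hardy hn hu h2u A hA
    have hS' := hS hu h2u
    set M := ∫⁻ x, ‖x‖ₑ ^ A * ‖fderiv ℝ u x‖ₑ with hM
    have hum : Measurable (fun x => ‖u x‖ₑ) := hu.continuous.enorm.measurable
    have eQ : Q = (1 - s) + P * s := by rw [hPs, hs]; ring
    calc _ = ∫⁻ x, (‖x‖ₑ ^ (A - 1) * ‖u x‖ₑ) ^ (1 - s) * ((‖x‖ₑ ^ A * ‖u x‖ₑ) ^ P) ^ s := by
          refine lintegral_congr_ae ?_
          filter_upwards [ckn_ae hn] with x hx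
          have hx0 : ‖x‖ₑ ≠ 0 := by simpa using hx
          rw [← ENNReal.rpow_mul, ENNReal.mul_rpow_of_nonneg _ _ hs1,
            ENNReal.mul_rpow_of_nonneg _ _ (by positivity), ← ENNReal.rpow_mul, ← ENNReal.rpow_mul]
          have e1 : ‖x‖ₑ ^ β = ‖x‖ₑ ^ ((A - 1) * (1 - s)) * ‖x‖ₑ ^ (A * (P * s)) := by
            rw [← ENNReal.rpow_add _ _ hx0 (by simp), hPs, hβ, hs]; congr 1; ring
          have e2 : ‖u x‖ₑ ^ Q = ‖u x‖ₑ ^ (1 - s) * ‖u x‖ₑ ^ (P * s) := by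
            rw [← ENNReal.rpow_add_of_nonneg _ _ hs1 (by positivity), ← eQ]
          rw [e1, e2]; ring
      _ ≤ (∫⁻ x, ‖x‖ₑ ^ (A - 1) * ‖u x‖ₑ) ^ (1 - s) * (∫⁻ x, (‖x‖ₑ ^ A * ‖u x‖ₑ) ^ P) ^ s :=
          ENNReal.lintegral_mul_norm_pow_le (by fun_prop) (by fun_prop) hs1 hs0 (by ring)
      _ ≤ (H * M) ^ (1 - s) * (C * M ^ P) ^ s := by gcongr
      _ = _ := by
          rw [ENNReal.mul_rpow_of_nonneg _ _ hs1, ENNReal.mul_rpow_of_nonneg _ _ hs0,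
            ← ENNReal.rpow_mul, eQ, ENNReal.rpow_add_of_nonneg _ _ hs1 (by positivity)]
          have : 1 - s + P * s = Q := eQ.symm
          ring

theorem ckn_main {n : ℕ} (hn : 1 ≤ n) (p q a b : ℝ)
    (hp : 1 ≤ p) (hpq : p ≤ q) (hb : -(n : ℝ) / q < b) (hba : b ≤ a)
    (hscal : a - b - 1 = (n : ℝ) / q - (n : ℝ) / p) :
    ∃ C : ENNReal, C ≠ ⊤ ∧ ∀ f : EuclideanSpace ℝ (Fin n) → ℂ,
      ContDiff ℝ 1 f → HasCompactSupport f →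
      (∫⁻ x, ‖x‖ₑ ^ (b * q) * ‖f x‖ₑ ^ q) ≠ ⊤ →
      (∫⁻ x, ‖x‖ₑ ^ (b * q) * ‖f x‖ₑ ^ q) ^ (1 / q)
        ≤ C * (∫⁻ x, ‖x‖ₑ ^ (a * p) * ‖fderiv ℝ f x‖ₑ ^ p) ^ (1 / p) := by
  have hp0 : 0 < p := by linarith
  have hq0 : 0 < q := by linarith
  have hip : 0 ≤ 1 - 1 / p := by
    have : 1 / p ≤ 1 := by rw [div_le_one hp0]; exact hp
    linarith
  set r := 1 + q * (1 - 1 / p) with hr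
  have hr1 : 1 ≤ r := by rw [hr]; nlinarith [mul_nonneg hq0.le hip]
  have hr0 : 0 < r := by linarith
  set Q := q / r with hQ
  have hQ0 : 0 < Q := by positivity
  have hQ1 : 1 ≤ Q := by
    rw [hQ, one_le_div hr0, hr]
    have : 1 ≤ q / p := by rwa [one_le_div hp0]
    have : q * (1 - 1 / p) = q - q / p := by ring
    linarith
  set A := a + b * (r - 1) with hA
  have hnr : (n:ℝ) * r / q = n + (a - b - 1) := by
    rw [hscal, hr]; field_simp; ring
  have hAe : A - 1 + n = r * (b + n / q) := by
    have : r * (b + n / q) = b * r + n * r / q := by ring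
    rw [this, hnr, hA]; ring
  have hbn : 0 < b + n / q := by
    have : -(n:ℝ) / q = -(n / q) := by ring
    linarith
  have hA1 : 1 - (n:ℝ) < A := by
    have := mul_pos hr0 hbn
    linarith
  have hQn : ((n:ℝ) - 1) * Q ≤ n := by
    have h1 : (n:ℝ) - 1 ≤ n * r / q := by rw [hnr]; linarith
    calc ((n:ℝ) - 1) * Q ≤ (n * r / q) * Q := by gcongr
      _ = n := by rw [hQ]; field_simp
  have hβ : b * q = (A - 1 + n) * Q - n := by
    rw [hAe, hQ]; field_simp; ring
  obtain ⟨K, hK, hmain⟩ := ckn_one hn A Q (b * q) hA1 hQ1 hQn hβ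
  have hrQ : r * Q = q := by rw [hQ]; field_simp
  -- intermediate
  have step : ∀ f : EuclideanSpace ℝ (Fin n) → ℂ,
      ContDiff ℝ 1 f → HasCompactSupport f →
      (∫⁻ x, ‖x‖ₑ ^ (b * q) * ‖f x‖ₑ ^ q) ≤
        K * (ENNReal.ofReal r * ∫⁻ x, ‖x‖ₑ ^ A * (‖f x‖ₑ ^ (r - 1) * ‖fderiv ℝ f x‖ₑ)) ^ Q := by
    intro f hf h2f
    rcases hr1.eq_or_lt with h | h
    · have := hmain hf h2f
      have hQq : Q = q := by rw [← hrQ, ← h, one_mul]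
      rw [hQq] at this ⊢
      rw [← h]
      simpa using this
    · have hu : ContDiff ℝ 1 (fun x => ‖f x‖ ^ r) := (contDiff_norm_rpow h).comp hf
      have h2u : HasCompactSupport (fun x => ‖f x‖ ^ r) :=
        h2f.comp_left (g := fun z : ℂ => ‖z‖ ^ r) (by simp [hr0.ne'])
      have h3 := hmain hu h2u
      have e1 : ∀ x, ‖(‖f x‖ ^ r)‖ₑ ^ Q = ‖f x‖ₑ ^ q := by
        intro x
        rw [← ofReal_norm, Real.norm_of_nonneg (by positivity), ← ENNReal.ofReal_rpow_of_nonneg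
          (norm_nonneg _) hr0.le, ← ENNReal.rpow_mul, hrQ, ofReal_norm]
      simp_rw [e1] at h3
      refine h3.trans ?_
      gcongr
      rw [← lintegral_const_mul' _ _ (by simp)]
      refine lintegral_mono fun x => ?_
      rw [mul_left_comm]
      gcongr
      have := norm_fderiv_norm_rpow_le (hf.differentiable one_ne_zero) (x := x) h
      rw [← ofReal_norm, ← ofReal_norm (f x), ← ofReal_norm (fderiv ℝ f x),
        ENNReal.ofReal_rpow_of_nonneg (norm_nonneg _) (by linarith),
        ← ENNReal.ofReal_mul (by positivity), ← ENNReal.ofReal_mul (by positivity), ← mul_assoc]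
      exact ENNReal.ofReal_le_ofReal this
  refine ⟨(K * ENNReal.ofReal r ^ Q) ^ (1 / Q), ENNReal.rpow_ne_top_of_nonneg (by positivity)
    (ENNReal.mul_ne_top hK (ENNReal.rpow_ne_top_of_nonneg hQ0.le (by simp))), ?_⟩
  intro f hf h2f hN
  have hs := step f hf h2f
  have hfm : Measurable (fun x => ‖f x‖ₑ) := hf.continuous.enorm.measurable
  have hgm : Measurable (fun x => ‖fderiv ℝ f x‖ₑ) :=
    (hf.continuous_fderiv one_ne_zero).enorm.measurable
  have holder : ∫⁻ x, ‖x‖ₑ ^ A * (‖f x‖ₑ ^ (r - 1) * ‖fderiv ℝ f x‖ₑ) ≤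
      (∫⁻ x, ‖x‖ₑ ^ (a * p) * ‖fderiv ℝ f x‖ₑ ^ p) ^ (1 / p) *
      (∫⁻ x, ‖x‖ₑ ^ (b * q) * ‖f x‖ₑ ^ q) ^ (1 - 1 / p) := by
    refine le_trans (le_of_eq ?_) (ENNReal.lintegral_mul_norm_pow_le (p := 1 / p) (q := 1 - 1 / p)
      (by fun_prop) (by fun_prop) (by positivity) hip (by ring))
    refine lintegral_congr_ae ?_
    filter_upwards [ckn_ae hn] with x hx
    have hx0 : ‖x‖ₑ ≠ 0 := by simpa using hx
    rw [ENNReal.mul_rpow_of_nonneg _ _ (by positivity), ENNReal.mul_rpow_of_nonneg _ _ hip,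
      ← ENNReal.rpow_mul, ← ENNReal.rpow_mul, ← ENNReal.rpow_mul, ← ENNReal.rpow_mul]
    have e1 : ‖x‖ₑ ^ A = ‖x‖ₑ ^ (a * p * (1 / p)) * ‖x‖ₑ ^ (b * q * (1 - 1 / p)) := by
      rw [← ENNReal.rpow_add _ _ hx0 (by simp), hA, hr]; congr 1; field_simp; ring
    have e2 : p * (1 / p) = 1 := by field_simp
    have e3 : q * (1 - 1 / p) = r - 1 := by rw [hr]; ring
    rw [e1, e2, e3, ENNReal.rpow_one]; ring
  set N := ∫⁻ x, ‖x‖ₑ ^ (b * q) * ‖f x‖ₑ ^ q with hNd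
  set D := ∫⁻ x, ‖x‖ₑ ^ (a * p) * ‖fderiv ℝ f x‖ₑ ^ p with hDd
  by_cases hN0 : N = 0
  · rw [hN0, ENNReal.zero_rpow_of_pos (by positivity)]; exact zero_le
  have h1 : N ≤ (K * ENNReal.ofReal r ^ Q) * D ^ (Q / p) * N ^ (1 - 1 / r) := by
    calc N ≤ K * (ENNReal.ofReal r * (D ^ (1 / p) * N ^ (1 - 1 / p))) ^ Q := by
          refine hs.trans ?_
          gcongr
      _ = _ := by
          rw [ENNReal.mul_rpow_of_nonneg _ _ hQ0.le, ENNReal.mul_rpow_of_nonneg _ _ hQ0.le,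
            ← ENNReal.rpow_mul, ← ENNReal.rpow_mul]
          have e1 : 1 / p * Q = Q / p := by ring
          have e2 : (1 - 1 / p) * Q = 1 - 1 / r := by
            have : q * (1 - 1 / p) = r - 1 := by rw [hr]; ring
            rw [hQ, mul_div_assoc', mul_comm, this]; field_simp
          rw [e1, e2]; ring
  have h2 : N ^ (1 / r) ≤ (K * ENNReal.ofReal r ^ Q) * D ^ (Q / p) := by
    have hne0 : N ^ (1 - 1 / r) ≠ 0 := by simp [ENNReal.rpow_eq_zero_iff, hN0, hN]
    have hnt : N ^ (1 - 1 / r) ≠ ⊤ := ENNReal.rpow_ne_top_of_ne_zero hN0 hN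
    have e : N = N ^ (1 / r) * N ^ (1 - 1 / r) := by
      rw [← ENNReal.rpow_add _ _ hN0 hN]; simp
    rw [← ENNReal.mul_le_mul_iff_left hne0 hnt, ← e]
    exact h1
  have h3 := ENNReal.rpow_le_rpow h2 (z := 1 / Q) (by positivity)
  rw [← ENNReal.rpow_mul, ENNReal.mul_rpow_of_nonneg _ _ (by positivity), ← ENNReal.rpow_mul] at h3
  have e1 : 1 / r * (1 / Q) = 1 / q := by rw [← hrQ]; field_simp
  have e2 : Q / p * (1 / Q) = 1 / p := by field_simp
  rwa [e1, e2] at h3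

theorem ckn_conv {n : ℕ} (hn : 1 ≤ n) {F : Type*} [NormedAddCommGroup F]
    (g : EuclideanSpace ℝ (Fin n) → F) (hg : Continuous g) (α s : ℝ) (hs : 0 ≤ s) :
    ∫ x, ‖x‖ ^ α * ‖g x‖ ^ s = (∫⁻ x, ‖x‖ₑ ^ α * ‖g x‖ₑ ^ s).toReal := by
  rw [integral_eq_lintegral_of_nonneg_ae (.of_forall fun x => by positivity)]
  · congr 1
    refine lintegral_congr_ae ?_
    filter_upwards [ckn_ae hn] with x hx
    rw [ENNReal.ofReal_mul (by positivity), ckn_enorm_rpow x hx, ← ofReal_norm (g x),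
      ENNReal.ofReal_rpow_of_nonneg (norm_nonneg _) hs]
  · have : Measurable (fun x => ‖g x‖) := hg.norm.measurable
    refine Measurable.aestronglyMeasurable ?_
    fun_prop

theorem ckn_finite {n : ℕ} (hn : 1 ≤ n) {F : Type*} [NormedAddCommGroup F]
    (g : EuclideanSpace ℝ (Fin n) → F) (hg : Continuous g) (h2g : HasCompactSupport g)
    (α s : ℝ) (hs : 0 < s) (hα : -(n:ℝ) < α) :
    ∫⁻ x, ‖x‖ₑ ^ α * ‖g x‖ₑ ^ s ≠ ⊤ := by
  have hgm : Measurable (fun x => ‖g x‖) := hg.norm.measurable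
  obtain ⟨C, hC⟩ := h2g.exists_bound_of_continuous hg
  obtain ⟨R, -, hR⟩ := h2g.isBounded.exists_pos_norm_lt
  have hi : Integrable (fun x => ‖x‖ ^ α * ‖g x‖ ^ s) := by
    have h1 : IntegrableOn (fun x => ‖x‖ ^ α * ‖g x‖ ^ s) (Metric.ball 0 R) := by
      refine integrableOn_ball_of_norm_le_rpow (C := C ^ s) (α := -α) (by simpa using hn)
        (by simp; linarith) (.of_forall fun x => ?_) (Measurable.aestronglyMeasurable (by fun_prop))
      rw [Real.norm_of_nonneg (by positivity), neg_neg, mul_comm]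
      gcongr
      exact hC x
    refine (integrableOn_iff_integrable_of_support_subset fun x hx => ?_).1 h1
    rw [mem_ball_zero_iff]
    refine hR x (subset_tsupport g ?_)
    intro h0
    apply hx
    simp [h0, hs.ne']
  have := hi.lintegral_lt_top.ne
  convert this using 1
  refine lintegral_congr_ae ?_
  filter_upwards [ckn_ae hn] with x hx
  rw [ENNReal.ofReal_mul (by positivity), ckn_enorm_rpow x hx, ← ofReal_norm (g x),
    ENNReal.ofReal_rpow_of_nonneg (norm_nonneg _) hs.le]

/-- A special case of the Caffarelli–Kohn–Nirenberg weighted interpolation inequalities: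
for `n ≥ 1`, `1 ≤ p ≤ q < ∞`, `-n/q < b ≤ a` and `a - b - 1 = n/q - n/p`, one has
`‖|x|^b f‖_{L^q} ≤ C ‖|x|^a ∇f‖_{L^p}` for smooth compactly supported `f`. -/
theorem caffarelli_kohn_nirenberg (n : ℕ) (hn : 1 ≤ n) (p q a b : ℝ)
    (hp : 1 ≤ p) (hpq : p ≤ q) (hb : -(n : ℝ) / q < b) (hba : b ≤ a)
    (hscal : a - b - 1 = (n : ℝ) / q - (n : ℝ) / p) :
    ∃ C > 0, ∀ f : EuclideanSpace ℝ (Fin n) → ℂ,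
      ContDiff ℝ (⊤ : ℕ∞) f → HasCompactSupport f →
      (∫ x : EuclideanSpace ℝ (Fin n), ‖x‖ ^ (b * q) * ‖f x‖ ^ q) ^ (1 / q)
        ≤ C * (∫ x : EuclideanSpace ℝ (Fin n), ‖x‖ ^ (a * p) * ‖fderiv ℝ f x‖ ^ p) ^ (1 / p) := by
  obtain ⟨C, hC, h⟩ := ckn_main hn p q a b hp hpq hb hba hscal
  have hp0 : 0 < p := by linarith
  have hq0 : 0 < q := by linarith
  refine ⟨C.toReal + 1, by positivity, fun f hf h2f => ?_⟩
  have hf1 : ContDiff ℝ 1 f := hf.of_le (by exact_mod_cast le_top)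
  have hdf := hf1.continuous_fderiv one_ne_zero
  rw [ckn_conv hn f hf.continuous _ _ hq0.le, ckn_conv hn _ hdf _ _ hp0.le]
  have hD : ∫⁻ x, ‖x‖ₑ ^ (a * p) * ‖fderiv ℝ f x‖ₑ ^ p ≠ ⊤ := by
    refine ckn_finite hn _ hdf (h2f.fderiv ℝ) _ _ hp0 ?_
    have e : -(n:ℝ) / q = -(n / q) := by ring
    have h1 : 1 - (n:ℝ) / p < a := by linarith
    have h2 : (1 - (n:ℝ) / p) * p < a * p := by gcongr
    have h3 : (1 - (n:ℝ) / p) * p = p - n := by field_simp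
    linarith
  by_cases hN : ∫⁻ x, ‖x‖ₑ ^ (b * q) * ‖f x‖ₑ ^ q = ⊤
  · rw [hN, ENNReal.toReal_top, Real.zero_rpow (by positivity)]
    positivity
  have h1 := ENNReal.toReal_mono (ENNReal.mul_ne_top hC
    (ENNReal.rpow_ne_top_of_nonneg (by positivity) hD)) (h f hf1 h2f hN)
  rw [ENNReal.toReal_mul, ← ENNReal.toReal_rpow, ← ENNReal.toReal_rpow] at h1
  refine h1.trans ?_
  gcongr
  linarith
end

section
/- Let n ≥ 1, let 1 ≤ r < ∞, and let γ be a real number with γ + 1 < n/r. Then there exists a constant C > 0 such that for every smooth compactly supported function f : ℝ^n → ℂ, the weighted Hardy inequality (∫_{ℝ^n} |x|^{−(γ+1)r} |f(x)|^r dx)^{1/r} ≤ C (∫_{ℝ^n} |x|^{−γ r} |∇f(x)|^r dx)^{1/r} holds. -/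
open MeasureTheory Real

lemma wh_ray {n : ℕ} {f : EuclideanSpace ℝ (Fin n) → ℂ} (hf : ContDiff ℝ (⊤ : ℕ∞) f)
    (hc : HasCompactSupport f) {x : EuclideanSpace ℝ (Fin n)} (hx : x ≠ 0) :
    ‖f x‖ₑ ≤ ∫⁻ t in Set.Ioi (1 : ℝ), ‖fderiv ℝ f (t • x)‖ₑ * ‖x‖ₑ := by
  have hf1 : ContDiff ℝ 1 f := hf.of_le (by exact_mod_cast le_top)
  have h1 : ContDiff ℝ 1 (fun t : ℝ => f (t • x)) := hf1.comp (by fun_prop)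
  have h2 : HasCompactSupport (fun t : ℝ => f (t • x)) :=
    hc.comp_isClosedEmbedding (isClosedEmbedding_smul_left hx)
  have h3 := HasCompactSupport.integral_Ioi_deriv_eq h1 h2 1
  have h4 : ∀ t : ℝ, deriv (fun t : ℝ => f (t • x)) t = fderiv ℝ f (t • x) x := by
    intro t
    have e1 : HasDerivAt (fun t : ℝ => t • x) x t := by
      simpa using (hasDerivAt_id t).smul_const x
    have e2 := (hf1.differentiable one_ne_zero (t • x)).hasFDerivAt
    exact (e2.comp_hasDerivAt t e1).deriv
  have h5 : ‖f x‖ₑ = ‖∫ t in Set.Ioi (1 : ℝ), deriv (fun t : ℝ => f (t • x)) t‖ₑ := by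
    rw [h3]; simp
  rw [h5]
  refine (enorm_integral_le_lintegral_enorm _).trans ?_
  gcongr with t
  rw [h4]
  exact ContinuousLinearMap.le_opENorm _ _

lemma wh_jensen {a r : ℝ} (ha : 1 < a) (hr : 1 ≤ r) :
    ∃ K : ENNReal, K ≠ ⊤ ∧ ∀ h : ℝ → ENNReal, Measurable h →
      (∫⁻ t in Set.Ioi (1 : ℝ), h t) ^ r ≤
        K * ∫⁻ t in Set.Ioi (1 : ℝ), ENNReal.ofReal (t ^ (a * (r - 1))) * h t ^ r := by
  have hr0 : 0 < r := by linarith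
  set w : ℝ → ENNReal := fun t => ENNReal.ofReal (t ^ (-a)) with hw
  have hwm : Measurable w := by fun_prop
  set μ := (volume.restrict (Set.Ioi (1 : ℝ))).withDensity w with hμ
  have hfin : μ Set.univ ≠ ⊤ := by
    rw [hμ, withDensity_apply _ MeasurableSet.univ, Measure.restrict_univ]
    exact (integrableOn_Ioi_rpow_of_lt (by linarith) one_pos).lintegral_lt_top.ne
  refine ⟨(μ Set.univ ^ (1 / 1 - 1 / r)) ^ r, ?_, ?_⟩
  · refine ENNReal.rpow_ne_top_of_nonneg hr0.le (ENNReal.rpow_ne_top_of_nonneg ?_ hfin)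
    have : 1 / r ≤ 1 := by rw [div_le_one hr0]; exact hr
    linarith
  intro h hh
  set g : ℝ → ENNReal := fun t => ENNReal.ofReal (t ^ a) * h t with hg
  have hgm : Measurable g := by fun_prop
  have key := eLpNorm'_le_eLpNorm'_mul_rpow_measure_univ (μ := μ) (f := g) one_pos hr
    hgm.aestronglyMeasurable
  simp only [eLpNorm'_eq_lintegral_enorm, enorm_eq_self, ENNReal.rpow_one, div_one] at key
  have e1 : ∫⁻ t, g t ∂μ = ∫⁻ t in Set.Ioi (1 : ℝ), h t := by
    rw [hμ, lintegral_withDensity_eq_lintegral_mul _ hwm hgm]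
    refine setLIntegral_congr_fun measurableSet_Ioi fun t (ht : 1 < t) => ?_
    have t0 : 0 < t := by linarith
    simp only [Pi.mul_apply, hw, hg, ← mul_assoc]
    rw [← ENNReal.ofReal_mul (by positivity), ← Real.rpow_add t0]
    simp
  have e2 : ∫⁻ t, g t ^ r ∂μ =
      ∫⁻ t in Set.Ioi (1 : ℝ), ENNReal.ofReal (t ^ (a * (r - 1))) * h t ^ r := by
    rw [hμ, lintegral_withDensity_eq_lintegral_mul _ hwm (by fun_prop)]
    refine setLIntegral_congr_fun measurableSet_Ioi fun t (ht : 1 < t) => ?_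
    have t0 : 0 < t := by linarith
    simp only [Pi.mul_apply, hw, hg]
    rw [ENNReal.mul_rpow_of_nonneg _ _ hr0.le, ENNReal.ofReal_rpow_of_nonneg (by positivity) hr0.le,
      ← mul_assoc, ← ENNReal.ofReal_mul (by positivity), ← Real.rpow_mul t0.le, ← Real.rpow_add t0]
    ring_nf
  rw [e1, e2] at key
  calc _ ≤ _ := ENNReal.rpow_le_rpow key hr0.le
    _ = _ := by
      rw [ENNReal.mul_rpow_of_nonneg _ _ hr0.le, ← ENNReal.rpow_mul, one_div_mul_cancel hr0.ne',
        ENNReal.rpow_one, mul_comm, div_one]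

lemma wh_scale {n : ℕ} {G : EuclideanSpace ℝ (Fin n) → ENNReal} (hG : Measurable G)
    {t : ℝ} (ht : 0 < t) :
    ∫⁻ x, G (t • x) = ENNReal.ofReal (t ^ (-(n : ℝ))) * ∫⁻ x, G x := by
  have h := Measure.map_addHaar_smul (volume : Measure (EuclideanSpace ℝ (Fin n))) ht.ne'
  rw [← lintegral_map (g := fun x => t • x) hG (by fun_prop), h, lintegral_smul_measure]
  simp only [finrank_euclideanSpace, Fintype.card_fin, smul_eq_mul]
  rw [abs_of_pos (by positivity), Real.rpow_neg ht.le, Real.rpow_natCast]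

lemma wh_fin {n : ℕ} (hn : 1 ≤ n) {r s : ℝ} (hr : 1 ≤ r) (hs : -(n : ℝ) < s)
    {f : EuclideanSpace ℝ (Fin n) → ℂ} (hf : ContDiff ℝ (⊤ : ℕ∞) f)
    (hc : HasCompactSupport f) :
    ∫⁻ x, ENNReal.ofReal (‖x‖ ^ s * ‖fderiv ℝ f x‖ ^ r) ≠ ⊤ := by
  have hr0 : 0 < r := by linarith
  have : Nonempty (Fin n) := ⟨⟨0, hn⟩⟩
  have hf1 : ContDiff ℝ 1 f := hf.of_le (by exact_mod_cast le_top)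
  have hcd : Continuous (fderiv ℝ f) := hf1.continuous_fderiv one_ne_zero
  obtain ⟨M, hM⟩ := (hc.fderiv (𝕜 := ℝ)).exists_bound_of_continuous hcd
  obtain ⟨R, hR⟩ := (hc.fderiv (𝕜 := ℝ)).isCompact.isBounded.subset_ball 0
  have hI : IntegrableOn (fun x : EuclideanSpace ℝ (Fin n) => ‖x‖ ^ s) (Metric.ball 0 R) := by
    refine (integrableOn_fun_norm_addHaar volume (f := fun y : ℝ => y ^ s)).2 ?_
    have h1 : IntegrableOn (fun y : ℝ => y ^ ((n : ℝ) - 1 + s)) (Set.Ioo 0 R) := by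
      by_cases hR0 : 0 ≤ R
      · have := (intervalIntegral.intervalIntegrable_rpow' (a := 0) (b := R)
          (r := (n : ℝ) - 1 + s) (by linarith))
        rw [intervalIntegrable_iff_integrableOn_Ioo_of_le hR0] at this
        exact this
      · rw [Set.Ioo_eq_empty (by linarith)]; simp
    refine h1.congr_fun (fun y hy => ?_) measurableSet_Ioo
    have hy0 : 0 < y := hy.1
    simp only [finrank_euclideanSpace, Fintype.card_fin, smul_eq_mul]
    rw [Real.rpow_add hy0, ← Real.rpow_natCast y (n - 1), Nat.cast_sub hn, Nat.cast_one]
  have h2 : ∫⁻ x, ENNReal.ofReal (‖x‖ ^ s * ‖fderiv ℝ f x‖ ^ r) ≤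
      ∫⁻ x in Metric.ball (0 : EuclideanSpace ℝ (Fin n)) R, ENNReal.ofReal (‖x‖ ^ s * M ^ r) := by
    rw [← lintegral_indicator measurableSet_ball]
    refine lintegral_mono fun x => ?_
    by_cases hx : x ∈ Metric.ball 0 R
    · rw [Set.indicator_of_mem hx]
      gcongr
      exact hM x
    · have : fderiv ℝ f x = 0 := image_eq_zero_of_notMem_tsupport fun h => hx (hR h)
      simp [this, Real.zero_rpow hr0.ne']
  exact (h2.trans_lt (hI.mul_const (M ^ r)).lintegral_lt_top).ne

lemma wh_main (n : ℕ) (hn : 1 ≤ n) (r γ : ℝ)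
    (hr : 1 ≤ r) (hγ : γ + 1 < (n : ℝ) / r) :
    ∃ K : ENNReal, K ≠ ⊤ ∧ ∀ f : EuclideanSpace ℝ (Fin n) → ℂ,
      ContDiff ℝ (⊤ : ℕ∞) f → HasCompactSupport f →
      ∫⁻ x : EuclideanSpace ℝ (Fin n), ENNReal.ofReal (‖x‖ ^ (-((γ + 1) * r)) * ‖f x‖ ^ r)
        ≤ K * ∫⁻ x : EuclideanSpace ℝ (Fin n),
            ENNReal.ofReal (‖x‖ ^ (-(γ * r)) * ‖fderiv ℝ f x‖ ^ r) := by
  have hr0 : 0 < r := by linarith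
  have : Nonempty (Fin n) := ⟨⟨0, hn⟩⟩
  rw [lt_div_iff₀ hr0] at hγ
  obtain ⟨a, ha1, ha⟩ : ∃ a : ℝ, 1 < a ∧ a * (r - 1) + γ * r - n < -1 := by
    set d := n - (γ + 1) * r with hd
    have hd0 : 0 < d := by linarith
    refine ⟨1 + d / (2 * r), by simp; positivity, ?_⟩
    have : d / (2 * r) * (r - 1) < d := by
      rw [div_mul_eq_mul_div, div_lt_iff₀ (by positivity)]
      nlinarith
    nlinarith
  obtain ⟨K, hK, hJ⟩ := wh_jensen ha1 hr
  set L := ∫⁻ t in Set.Ioi (1 : ℝ), ENNReal.ofReal (t ^ (a * (r - 1) + γ * r - n)) with hL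
  have hLt : L ≠ ⊤ := (integrableOn_Ioi_rpow_of_lt ha one_pos).lintegral_lt_top.ne
  refine ⟨K * L, ENNReal.mul_ne_top hK hLt, fun f hf hc => ?_⟩
  have hf1 : ContDiff ℝ 1 f := hf.of_le (by exact_mod_cast le_top)
  have hcd : Continuous (fderiv ℝ f) := hf1.continuous_fderiv one_ne_zero
  set G : EuclideanSpace ℝ (Fin n) → ENNReal := fun x =>
    ENNReal.ofReal (‖x‖ ^ (-(γ * r)) * ‖fderiv ℝ f x‖ ^ r) with hG
  have hGm : Measurable G := by
    have := hcd.measurable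
    fun_prop
  have hpt : ∀ x : EuclideanSpace ℝ (Fin n), x ≠ 0 →
      ENNReal.ofReal (‖x‖ ^ (-((γ + 1) * r)) * ‖f x‖ ^ r) ≤
      K * ∫⁻ t in Set.Ioi (1 : ℝ), ENNReal.ofReal (t ^ (a * (r - 1) + γ * r)) * G (t • x) := by
    intro x hx
    have hx0 : 0 < ‖x‖ := norm_pos_iff.2 hx
    have hm : Measurable fun t : ℝ => ‖fderiv ℝ f (t • x)‖ₑ * ‖x‖ₑ := by
      have : Continuous fun t : ℝ => fderiv ℝ f (t • x) := hcd.comp (by fun_prop)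
      exact (this.enorm.measurable).mul_const _
    calc ENNReal.ofReal (‖x‖ ^ (-((γ + 1) * r)) * ‖f x‖ ^ r)
        = ENNReal.ofReal (‖x‖ ^ (-((γ + 1) * r))) * ‖f x‖ₑ ^ r := by
          rw [ENNReal.ofReal_mul (by positivity), ← ofReal_norm,
            ENNReal.ofReal_rpow_of_nonneg (norm_nonneg _) hr0.le]
      _ ≤ ENNReal.ofReal (‖x‖ ^ (-((γ + 1) * r))) *
          (K * ∫⁻ t in Set.Ioi (1 : ℝ), ENNReal.ofReal (t ^ (a * (r - 1))) *
            (‖fderiv ℝ f (t • x)‖ₑ * ‖x‖ₑ) ^ r) := by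
          gcongr
          exact (ENNReal.rpow_le_rpow (wh_ray hf hc hx) hr0.le).trans (hJ _ hm)
      _ = _ := by
          rw [mul_left_comm, ← lintegral_const_mul' _ _ ENNReal.ofReal_ne_top]
          congr 1
          refine setLIntegral_congr_fun measurableSet_Ioi fun t (ht : 1 < t) => ?_
          have t0 : 0 < t := by linarith
          simp only [hG, ← ofReal_norm]
          rw [← ENNReal.ofReal_mul (by positivity),
            ENNReal.ofReal_rpow_of_nonneg (by positivity) hr0.le,
            ← ENNReal.ofReal_mul (by positivity), ← ENNReal.ofReal_mul (by positivity),
            ← ENNReal.ofReal_mul (by positivity)]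
          congr 1
          rw [norm_smul, Real.norm_of_nonneg t0.le, Real.mul_rpow (norm_nonneg _) hx0.le,
            Real.mul_rpow t0.le hx0.le, Real.rpow_add t0,
            show -((γ + 1) * r) = -(γ * r) + -r by ring, Real.rpow_add hx0,
            Real.rpow_neg hx0.le r, Real.rpow_neg t0.le]
          have := (Real.rpow_pos_of_pos hx0 r).ne'
          have := (Real.rpow_pos_of_pos t0 (γ * r)).ne'
          field_simp
  have hae : ∀ᵐ x : EuclideanSpace ℝ (Fin n), x ≠ 0 := by
    simp [ae_iff]
  calc _ ≤ ∫⁻ x, K * ∫⁻ t in Set.Ioi (1 : ℝ),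
          ENNReal.ofReal (t ^ (a * (r - 1) + γ * r)) * G (t • x) :=
        lintegral_mono_ae (hae.mono hpt)
    _ = K * ∫⁻ t in Set.Ioi (1 : ℝ), ∫⁻ x,
          ENNReal.ofReal (t ^ (a * (r - 1) + γ * r)) * G (t • x) := by
        rw [lintegral_const_mul' _ _ hK, lintegral_lintegral_swap]
        have h1 : Measurable fun p : EuclideanSpace ℝ (Fin n) × ℝ => G (p.2 • p.1) :=
          hGm.comp (by fun_prop)
        have h2 : Measurable fun p : EuclideanSpace ℝ (Fin n) × ℝ =>
          ENNReal.ofReal (p.2 ^ (a * (r - 1) + γ * r)) := by fun_prop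
        exact (h2.mul h1).aemeasurable
    _ = K * ∫⁻ t in Set.Ioi (1 : ℝ),
          ENNReal.ofReal (t ^ (a * (r - 1) + γ * r - n)) * ∫⁻ x, G x := by
        congr 1
        refine setLIntegral_congr_fun measurableSet_Ioi fun t (ht : 1 < t) => ?_
        have t0 : 0 < t := by linarith
        rw [lintegral_const_mul' _ _ ENNReal.ofReal_ne_top, wh_scale hGm t0, ← mul_assoc,
          ← ENNReal.ofReal_mul (by positivity), ← Real.rpow_add t0, ← sub_eq_add_neg]
    _ = _ := by
        rw [lintegral_mul_const _ (by fun_prop), mul_assoc]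

theorem weighted_hardy (n : ℕ) (hn : 1 ≤ n) (r γ : ℝ)
    (hr : 1 ≤ r) (hγ : γ + 1 < (n : ℝ) / r) :
    ∃ C > 0, ∀ f : EuclideanSpace ℝ (Fin n) → ℂ,
      ContDiff ℝ (⊤ : ℕ∞) f → HasCompactSupport f →
      (∫ x : EuclideanSpace ℝ (Fin n), ‖x‖ ^ (-((γ + 1) * r)) * ‖f x‖ ^ r) ^ (1 / r)
        ≤ C * (∫ x : EuclideanSpace ℝ (Fin n), ‖x‖ ^ (-(γ * r)) * ‖fderiv ℝ f x‖ ^ r) ^ (1 / r) := by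
  have hr0 : 0 < r := by linarith
  obtain ⟨K, hK, hmain⟩ := wh_main n hn r γ hr hγ
  refine ⟨K.toReal ^ (1 / r) + 1, by positivity, fun f hf hc => ?_⟩
  have hf1 : ContDiff ℝ 1 f := hf.of_le (by exact_mod_cast le_top)
  have hm1 := hf.continuous.measurable
  have hm2 := (hf1.continuous_fderiv one_ne_zero).measurable
  have hfin := wh_fin hn hr (s := -(γ * r)) (by rw [lt_div_iff₀ hr0] at hγ; linarith) hf hc
  have h := ENNReal.toReal_mono (ENNReal.mul_ne_top hK hfin) (hmain f hf hc)
  rw [ENNReal.toReal_mul] at h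
  rw [integral_eq_lintegral_of_nonneg_ae (.of_forall fun x => by positivity)
      (by apply Measurable.aestronglyMeasurable; fun_prop),
    integral_eq_lintegral_of_nonneg_ae (.of_forall fun x => by positivity)
      (by apply Measurable.aestronglyMeasurable; fun_prop)]
  refine (Real.rpow_le_rpow ENNReal.toReal_nonneg h (by positivity)).trans ?_
  rw [Real.mul_rpow ENNReal.toReal_nonneg ENNReal.toReal_nonneg]
  gcongr
  linarith
end
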